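/- For every real u with 0.841 < u < 1, the square-network quantum distribution P_Q^□ is nonlocal on the network with bipartite sources S₁ (connecting A₁,A₂) and S₂ (connecting A₂,A₃) and a tripartite source S₃ (connecting A₁, A₃, A₄): there do not exist types Λ₁, Λ₂, Λ₃ with probability distributions μ₁, μ₂, μ₃ and response kernels p₁(a₁|λ₁,λ₃), p₂(a₂|λ₁,λ₂), p₃(a₃|λ₂,λ₃), p₄(a₄|λ₃), each output in {0, 1₀, 1₁, 2}, such that P_Q^□(a₁,a₂,a₃,a₄) equals the expectation over independently sampled λ₁, λ₂, λ₃ of the product of these kernels, for all outcomes. -/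

import Mathlib

open MeasureTheory

noncomputable def uco (u : ℝ) : Fin 2 → ℝ := ![u, Real.sqrt (1 - u ^ 2)]
noncomputable def vco (u : ℝ) : Fin 2 → ℝ := ![Real.sqrt (1 - u ^ 2), -u]

inductive Outc where
  | zero : Outc
  | one : Fin 2 → Outc
  | two : Outc
  deriving DecidableEq, Fintype

noncomputable def psiPlus : Fin 2 → Fin 2 → ℝ := fun i j =>
  if i = 0 ∧ j = 1 then (Real.sqrt 2)⁻¹ else if i = 1 ∧ j = 0 then (Real.sqrt 2)⁻¹ else 0

noncomputable def basisVec (u : ℝ) : Outc → Fin 2 → Fin 2 → ℝ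
  | Outc.zero => fun l r => if l = 0 ∧ r = 0 then 1 else 0
  | Outc.one i => fun l r => if l = 0 ∧ r = 1 then uco u i else if l = 1 ∧ r = 0 then vco u i else 0
  | Outc.two => fun l r => if l = 1 ∧ r = 1 then 1 else 0

def finNext {N : ℕ} (k : Fin N) : Fin N := ⟨(k.val + 1) % N, Nat.mod_lt _ k.pos⟩

noncomputable def ringAmp (N : ℕ) (u : ℝ) (a : Fin N → Outc) : ℝ :=
  ∑ L : Fin N → Fin 2, ∑ R : Fin N → Fin 2,
    (∏ k, basisVec u (a k) (L k) (R k)) * ∏ k, psiPlus (R k) (L (finNext k))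

noncomputable def ringP (N : ℕ) (u : ℝ) (a : Fin N → Outc) : ℝ := ringAmp N u a ^ 2

/-- The number of tokens announced by an outcome. -/
def Outc.tok : Outc → ℕ
  | Outc.zero => 0
  | Outc.one _ => 1
  | Outc.two => 2

theorem Outc.sum_eq (f : Outc → ℝ) :
    ∑ a, f a = f .zero + (f (.one 0) + f (.one 1)) + f .two := by
  have h : (Finset.univ : Finset Outc) = {.zero, .one 0, .one 1, .two} := by decide
  rw [h, Finset.sum_insert (by decide), Finset.sum_insert (by decide),
    Finset.sum_insert (by decide), Finset.sum_singleton]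
  ring

theorem sum_fin_four_fun (F : (Fin 4 → Fin 2) → ℝ) :
    ∑ f, F f = ∑ a, ∑ b, ∑ c, ∑ d, F ![a, b, c, d] := by
  have key : ∀ (n : ℕ) (G : (Fin (n + 1) → Fin 2) → ℝ),
      ∑ f, G f = ∑ a, ∑ g : Fin n → Fin 2, G (Matrix.vecCons a g) := by
    intro n G
    rw [← (Fin.consEquiv fun _ : Fin (n + 1) => Fin 2).sum_comp, Fintype.sum_prod_type]
    rfl
  simp only [key 3, key 2, key 1, key 0, Finset.univ_unique, Finset.sum_singleton]
  rfl

theorem ringAmp_four (u : ℝ) (a b c d : Outc) :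
    ringAmp 4 u ![a, b, c, d] = 1 / 4 * ∑ r₁, ∑ r₂, ∑ r₃, ∑ r₄,
      basisVec u a (1 - r₄) r₁ * basisVec u b (1 - r₁) r₂ *
        basisVec u c (1 - r₂) r₃ * basisVec u d (1 - r₃) r₄ := by
  have h2 : (Real.sqrt 2)⁻¹ * (Real.sqrt 2)⁻¹ = 1 / 2 := by
    rw [← mul_inv, Real.mul_self_sqrt (by norm_num)]; norm_num
  have hψ : ∀ i j, psiPlus i j = if j = 1 - i then (Real.sqrt 2)⁻¹ else 0 := by
    intro i j
    fin_cases i <;> fin_cases j <;> simp [psiPlus]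
  have hprod : ∀ L R : Fin 4 → Fin 2, ∏ k, psiPlus (R k) (L (finNext k)) =
      if L = ![1 - R 3, 1 - R 0, 1 - R 1, 1 - R 2] then 1 / 4 else 0 := by
    intro L R
    have e : ∏ k, psiPlus (R k) (L (finNext k)) = psiPlus (R 0) (L 1) * psiPlus (R 1) (L 2) *
      psiPlus (R 2) (L 3) * psiPlus (R 3) (L 0) := by rw [Fin.prod_univ_four]; rfl
    rw [e]
    simp only [hψ]
    have hL : L = ![1 - R 3, 1 - R 0, 1 - R 1, 1 - R 2] ↔
        L 1 = 1 - R 0 ∧ L 2 = 1 - R 1 ∧ L 3 = 1 - R 2 ∧ L 0 = 1 - R 3 := by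
      simp only [funext_iff, Fin.forall_fin_succ]
      simp
      tauto
    by_cases h : L 1 = 1 - R 0 ∧ L 2 = 1 - R 1 ∧ L 3 = 1 - R 2 ∧ L 0 = 1 - R 3
    · rw [if_pos (hL.2 h), if_pos h.1, if_pos h.2.1, if_pos h.2.2.1, if_pos h.2.2.2, mul_assoc,
        h2]
      norm_num
    · rw [if_neg (hL.not.2 h)]
      split_ifs <;> first | exact absurd ⟨‹_›, ‹_›, ‹_›, ‹_›⟩ h | simp
  unfold ringAmp
  rw [Finset.sum_comm]
  simp only [hprod, mul_ite, mul_zero, Finset.sum_ite_eq', Finset.mem_univ, if_true]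
  rw [sum_fin_four_fun]
  simp only [Finset.mul_sum]
  refine Finset.sum_congr rfl fun r₁ _ => Finset.sum_congr rfl fun r₂ _ =>
    Finset.sum_congr rfl fun r₃ _ => Finset.sum_congr rfl fun r₄ _ => ?_
  simp [Fin.prod_univ_four]
  ring

/-- Token counts that arise from each of the four sources sending one token to one of its
neighbours. -/
def Compat (n₁ n₂ n₃ n₄ : ℕ) : Prop :=
  ∃ x y s t : ℕ, x ≤ 1 ∧ y ≤ 1 ∧ s ≤ 1 ∧ t ≤ 1 ∧
    n₁ + x = 1 + s ∧ n₂ = x + y ∧ n₃ + y = 1 + t ∧ n₄ + s + t = 2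

theorem tok_of_basisVec_ne_zero {u : ℝ} {a : Outc} {l r : Fin 2} (h : basisVec u a l r ≠ 0) :
    a.tok = l.val + r.val := by
  cases a <;> fin_cases l <;> fin_cases r <;> simp_all [basisVec, Outc.tok]

theorem compat_of_ringP_ne_zero {u : ℝ} {a b c d : Outc} (h : ringP 4 u ![a, b, c, d] ≠ 0) :
    Compat a.tok b.tok c.tok d.tok := by
  rw [ringP, ringAmp_four] at h
  have h' := right_ne_zero_of_mul (pow_ne_zero_iff (two_ne_zero) |>.1 h)
  obtain ⟨r₁, -, h'⟩ := Finset.exists_ne_zero_of_sum_ne_zero h'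
  obtain ⟨r₂, -, h'⟩ := Finset.exists_ne_zero_of_sum_ne_zero h'
  obtain ⟨r₃, -, h'⟩ := Finset.exists_ne_zero_of_sum_ne_zero h'
  obtain ⟨r₄, -, h'⟩ := Finset.exists_ne_zero_of_sum_ne_zero h'
  simp only [mul_ne_zero_iff] at h'
  obtain ⟨⟨⟨h₁, h₂⟩, h₃⟩, h₄⟩ := h'
  have hsub : ∀ r : Fin 2, (1 - r).val = 1 - r.val := by decide
  have e₁ := tok_of_basisVec_ne_zero h₁
  have e₂ := tok_of_basisVec_ne_zero h₂
  have e₃ := tok_of_basisVec_ne_zero h₃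
  have e₄ := tok_of_basisVec_ne_zero h₄
  rw [hsub] at e₁ e₂ e₃ e₄
  refine ⟨1 - r₁.val, r₂.val, 1 - r₄.val, r₃.val, ?_⟩
  omega

theorem ringP_four_values (u : ℝ) :
    ringP 4 u ![.zero, .two, .zero, .two] = 1 / 16 ∧
    ringP 4 u ![.two, .zero, .two, .zero] = 1 / 16 ∧
    (∀ i j, ringP 4 u ![.zero, .one i, .one j, .two] = (vco u i * vco u j) ^ 2 / 16) ∧
    (∀ i j, ringP 4 u ![.one i, .one j, .zero, .two] = (uco u i * uco u j) ^ 2 / 16) ∧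
    (∀ i j, ringP 4 u ![.two, .zero, .one i, .one j] = (vco u i * vco u j) ^ 2 / 16) ∧
    (∀ i j, ringP 4 u ![.one i, .two, .zero, .one j] = (vco u i * vco u j) ^ 2 / 16) ∧
    (∀ i j k l, ringP 4 u ![.one i, .one j, .one k, .one l] =
      (uco u i * uco u j * uco u k * uco u l + vco u i * vco u j * vco u k * vco u l) ^ 2 / 16) := by
  refine ⟨?_, ?_, ?_, ?_, ?_, ?_, ?_⟩ <;> intros <;> rw [ringP, ringAmp_four] <;>
    simp [Fin.sum_univ_two, basisVec] <;> ring

/-- A measurable function with values in the unit interval. -/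
structure UnitValued {α : Type} [MeasurableSpace α] (f : α → ℝ) : Prop where
  meas : Measurable f
  nonneg : ∀ z, 0 ≤ f z
  le_one : ∀ z, f z ≤ 1

namespace UnitValued

variable {α β : Type} [MeasurableSpace α] [MeasurableSpace β] {f g : α → ℝ}

theorem mul (hf : UnitValued f) (hg : UnitValued g) : UnitValued fun z => f z * g z :=
  ⟨hf.meas.mul hg.meas, fun z => mul_nonneg (hf.nonneg z) (hg.nonneg z),
    fun z => mul_le_one₀ (hf.le_one z) (hg.nonneg z) (hg.le_one z)⟩

theorem one_sub (hf : UnitValued f) : UnitValued fun z => 1 - f z :=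
  ⟨measurable_const.sub hf.meas, fun z => sub_nonneg.2 (hf.le_one z),
    fun z => sub_le_self _ (hf.nonneg z)⟩

theorem comp (hf : UnitValued f) {φ : β → α} (hφ : Measurable φ) :
    UnitValued fun z => f (φ z) :=
  ⟨hf.meas.comp hφ, fun _ => hf.nonneg _, fun _ => hf.le_one _⟩

theorem integrable (hf : UnitValued f) (μ : Measure α) [IsProbabilityMeasure μ] :
    Integrable f μ :=
  Integrable.of_bound hf.meas.aestronglyMeasurable 1 (Filter.Eventually.of_forall fun z => by
    rw [Real.norm_eq_abs, abs_of_nonneg (hf.nonneg z)]; exact hf.le_one z)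

end UnitValued

/-- The integral of a unit-valued function over a product of three spaces is an iterated
integral. -/
theorem UnitValued.integral_eq {Λ₁ Λ₂ Λ₃ : Type} [MeasurableSpace Λ₁] [MeasurableSpace Λ₂]
    [MeasurableSpace Λ₃] {f : Λ₁ × Λ₂ × Λ₃ → ℝ} (hf : UnitValued f) (μ₁ : Measure Λ₁)
    (μ₂ : Measure Λ₂) (μ₃ : Measure Λ₃) [IsProbabilityMeasure μ₁] [IsProbabilityMeasure μ₂]
    [IsProbabilityMeasure μ₃] :
    ∫ z, f z ∂μ₁.prod (μ₂.prod μ₃) =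
      ∫ x₁, ∫ x₂, ∫ x₃, f (x₁, x₂, x₃) ∂μ₃ ∂μ₂ ∂μ₁ := by
  rw [integral_prod f (hf.integrable _)]
  refine integral_congr_ae (Filter.Eventually.of_forall fun x => ?_)
  exact integral_prod (fun w => f (x, w)) ((hf.comp measurable_prodMk_left).integrable _)

/-- A measurable response kernel with outputs in `Outc`. -/
structure IsKernel {α : Type} [MeasurableSpace α] (p : Outc → α → ℝ) : Prop where
  meas : ∀ a, Measurable (p a)
  nonneg : ∀ a z, 0 ≤ p a z
  sum_eq : ∀ z, ∑ a, p a z = 1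

/-- The probability of announcing exactly one token. -/
noncomputable def ones {α : Type} (p : Outc → α → ℝ) (z : α) : ℝ := p (.one 0) z + p (.one 1) z

namespace IsKernel

variable {α β : Type} [MeasurableSpace α] [MeasurableSpace β] {p : Outc → α → ℝ}

theorem add_eq_one (hp : IsKernel p) (z : α) : p .zero z + ones p z + p .two z = 1 := by
  rw [← hp.sum_eq z, Outc.sum_eq, ones]

theorem unitValued (hp : IsKernel p) (a : Outc) : UnitValued (p a) :=
  ⟨hp.meas a, hp.nonneg a, fun z => hp.sum_eq z ▸
    Finset.single_le_sum (f := fun a => p a z) (fun b _ => hp.nonneg b z) (Finset.mem_univ a)⟩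

theorem ones_unitValued (hp : IsKernel p) : UnitValued (ones p) :=
  ⟨(hp.meas _).add (hp.meas _), fun z => add_nonneg (hp.nonneg _ z) (hp.nonneg _ z), fun z => by
    linarith [hp.add_eq_one z, hp.nonneg .zero z, hp.nonneg .two z]⟩

theorem comp (hp : IsKernel p) {φ : β → α} (hφ : Measurable φ) :
    IsKernel fun a z => p a (φ z) :=
  ⟨fun a => (hp.meas a).comp hφ, fun a _ => hp.nonneg a _, fun _ => hp.sum_eq _⟩

end IsKernel

/-- A local model of the square distribution with two bipartite sources and one tripartite
source. -/
structure IsLocalModel {Λ₁ Λ₂ Λ₃ : Type} [MeasurableSpace Λ₁] [MeasurableSpace Λ₂]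
    [MeasurableSpace Λ₃] (u : ℝ) (μ₁ : Measure Λ₁) (μ₂ : Measure Λ₂) (μ₃ : Measure Λ₃)
    (p₁ : Outc → Λ₁ × Λ₃ → ℝ) (p₂ : Outc → Λ₁ × Λ₂ → ℝ) (p₃ : Outc → Λ₂ × Λ₃ → ℝ)
    (p₄ : Outc → Λ₃ → ℝ) : Prop where
  ker₁ : IsKernel p₁
  ker₂ : IsKernel p₂
  ker₃ : IsKernel p₃
  ker₄ : IsKernel p₄
  eq_integral : ∀ a b c d, ringP 4 u ![a, b, c, d] = ∫ x₁, ∫ x₂, ∫ x₃,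
    p₁ a (x₁, x₃) * p₂ b (x₁, x₂) * p₃ c (x₂, x₃) * p₄ d x₃ ∂μ₃ ∂μ₂ ∂μ₁

/-- Binary functions describing where each source sends its token: `X`, `Y` for the bipartite
sources, `S`, `T` for the tripartite one. -/
structure IsSplit {Λ₁ Λ₂ Λ₃ : Type} [MeasurableSpace Λ₁] [MeasurableSpace Λ₂]
    [MeasurableSpace Λ₃] (μ₁ : Measure Λ₁) (μ₂ : Measure Λ₂) (μ₃ : Measure Λ₃)
    (p₁ : Outc → Λ₁ × Λ₃ → ℝ) (p₂ : Outc → Λ₁ × Λ₂ → ℝ) (p₃ : Outc → Λ₂ × Λ₃ → ℝ)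
    (X : Λ₁ → ℝ) (Y : Λ₂ → ℝ) (S T : Λ₃ → ℝ) : Prop where
  unitX : UnitValued X
  unitY : UnitValued Y
  binX : ∀ᵐ x₁ ∂μ₁, X x₁ = 0 ∨ X x₁ = 1
  binY : ∀ᵐ x₂ ∂μ₂, Y x₂ = 0 ∨ Y x₂ = 1
  eq₁ : ∀ᵐ x₁ ∂μ₁, ∀ᵐ x₃ ∂μ₃, p₁ .zero (x₁, x₃) = X x₁ * (1 - S x₃) ∧
    p₁ .two (x₁, x₃) = (1 - X x₁) * S x₃
  eq₂ : ∀ᵐ x₁ ∂μ₁, ∀ᵐ x₂ ∂μ₂, p₂ .zero (x₁, x₂) = (1 - X x₁) * (1 - Y x₂) ∧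
    p₂ .two (x₁, x₂) = X x₁ * Y x₂
  eq₃ : ∀ᵐ x₂ ∂μ₂, ∀ᵐ x₃ ∂μ₃, p₃ .zero (x₂, x₃) = Y x₂ * (1 - T x₃) ∧
    p₃ .two (x₂, x₃) = (1 - Y x₂) * T x₃

section Split

variable {Λ₁ Λ₂ Λ₃ : Type} [MeasurableSpace Λ₁] [MeasurableSpace Λ₂]
  [MeasurableSpace Λ₃] {u : ℝ} {μ₁ : Measure Λ₁} {μ₂ : Measure Λ₂} {μ₃ : Measure Λ₃}
  {p₁ : Outc → Λ₁ × Λ₃ → ℝ} {p₂ : Outc → Λ₁ × Λ₂ → ℝ} {p₃ : Outc → Λ₂ × Λ₃ → ℝ}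
  {p₄ : Outc → Λ₃ → ℝ} {X : Λ₁ → ℝ} {Y : Λ₂ → ℝ} {S T : Λ₃ → ℝ}

/-- Iterated integrals of integrands that agree once the kernels are split. -/
theorem IsSplit.integral_congr (hs : IsSplit μ₁ μ₂ μ₃ p₁ p₂ p₃ X Y S T)
    (hm : IsLocalModel u μ₁ μ₂ μ₃ p₁ p₂ p₃ p₄) {f g : Λ₁ → Λ₂ → Λ₃ → ℝ}
    (h : ∀ x₁ x₂ x₃, (X x₁ = 0 ∨ X x₁ = 1) → (Y x₂ = 0 ∨ Y x₂ = 1) →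
      p₁ .zero (x₁, x₃) = X x₁ * (1 - S x₃) → p₁ .two (x₁, x₃) = (1 - X x₁) * S x₃ →
      ones p₁ (x₁, x₃) = X x₁ * S x₃ + (1 - X x₁) * (1 - S x₃) →
      p₂ .zero (x₁, x₂) = (1 - X x₁) * (1 - Y x₂) → p₂ .two (x₁, x₂) = X x₁ * Y x₂ →
      ones p₂ (x₁, x₂) = X x₁ * (1 - Y x₂) + (1 - X x₁) * Y x₂ →
      p₃ .zero (x₂, x₃) = Y x₂ * (1 - T x₃) → p₃ .two (x₂, x₃) = (1 - Y x₂) * T x₃ →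
      ones p₃ (x₂, x₃) = Y x₂ * T x₃ + (1 - Y x₂) * (1 - T x₃) →
      f x₁ x₂ x₃ = g x₁ x₂ x₃) :
    ∫ x₁, ∫ x₂, ∫ x₃, f x₁ x₂ x₃ ∂μ₃ ∂μ₂ ∂μ₁ = ∫ x₁, ∫ x₂, ∫ x₃, g x₁ x₂ x₃ ∂μ₃ ∂μ₂ ∂μ₁ := by
  refine integral_congr_ae ?_
  filter_upwards [hs.binX, hs.eq₁, hs.eq₂] with x₁ hX h₁ h₂
  refine integral_congr_ae ?_
  filter_upwards [hs.binY, h₂, hs.eq₃] with x₂ hY h₂ h₃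
  refine integral_congr_ae ?_
  filter_upwards [h₁, h₃] with x₃ h₁ h₃
  refine h x₁ x₂ x₃ hX hY h₁.1 h₁.2 ?_ h₂.1 h₂.2 ?_ h₃.1 h₃.2 ?_
  · linear_combination hm.ker₁.add_eq_one (x₁, x₃) - h₁.1 - h₁.2
  · linear_combination hm.ker₂.add_eq_one (x₁, x₂) - h₂.1 - h₂.2
  · linear_combination hm.ker₃.add_eq_one (x₂, x₃) - h₃.1 - h₃.2

theorem UnitValued.fst_thd {f : Λ₁ × Λ₃ → ℝ} (hf : UnitValued f) :
    UnitValued fun z : Λ₁ × Λ₂ × Λ₃ => f (z.1, z.2.2) := hf.comp (by fun_prop)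

theorem UnitValued.fst_snd {f : Λ₁ × Λ₂ → ℝ} (hf : UnitValued f) :
    UnitValued fun z : Λ₁ × Λ₂ × Λ₃ => f (z.1, z.2.1) := hf.comp (by fun_prop)

theorem UnitValued.snd_thd {f : Λ₂ × Λ₃ → ℝ} (hf : UnitValued f) :
    UnitValued fun z : Λ₁ × Λ₂ × Λ₃ => f (z.2.1, z.2.2) := hf.comp (by fun_prop)

theorem UnitValued.thd {f : Λ₃ → ℝ} (hf : UnitValued f) :
    UnitValued fun z : Λ₁ × Λ₂ × Λ₃ => f z.2.2 := hf.comp (by fun_prop)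

theorem UnitValued.prod_four {f₁ : Λ₁ × Λ₃ → ℝ} {f₂ : Λ₁ × Λ₂ → ℝ} {f₃ : Λ₂ × Λ₃ → ℝ}
    {f₄ : Λ₃ → ℝ} (h₁ : UnitValued f₁) (h₂ : UnitValued f₂) (h₃ : UnitValued f₃)
    (h₄ : UnitValued f₄) : UnitValued fun z : Λ₁ × Λ₂ × Λ₃ =>
      f₁ (z.1, z.2.2) * f₂ (z.1, z.2.1) * f₃ (z.2.1, z.2.2) * f₄ z.2.2 :=
  ((h₁.fst_thd.mul h₂.fst_snd).mul h₃.snd_thd).mul h₄.thd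

/-- An outcome with positive probability is not excluded almost everywhere. -/
theorem IsLocalModel.not_ae_eq_zero (hm : IsLocalModel u μ₁ μ₂ μ₃ p₁ p₂ p₃ p₄) {a b c d : Outc}
    (h : ringP 4 u ![a, b, c, d] = 1 / 16) :
    ¬ ∀ᵐ x₁ ∂μ₁, ∀ᵐ x₂ ∂μ₂, ∀ᵐ x₃ ∂μ₃, p₂ b (x₁, x₂) * p₄ d x₃ = 0 := by
  intro h0
  have : ∫ x₁, ∫ x₂, ∫ x₃, p₁ a (x₁, x₃) * p₂ b (x₁, x₂) * p₃ c (x₂, x₃) * p₄ d x₃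
      ∂μ₃ ∂μ₂ ∂μ₁ = 0 := by
    refine integral_eq_zero_of_ae ?_
    filter_upwards [h0] with x₁ h0
    refine integral_eq_zero_of_ae ?_
    filter_upwards [h0] with x₂ h0
    refine integral_eq_zero_of_ae ?_
    filter_upwards [h0] with x₃ h0
    simp only [Pi.zero_apply]
    linear_combination p₁ a (x₁, x₃) * p₃ c (x₂, x₃) * h0
  rw [← hm.eq_integral, h] at this
  norm_num at this

variable [IsProbabilityMeasure μ₁] [IsProbabilityMeasure μ₂] [IsProbabilityMeasure μ₃]

theorem IsLocalModel.eq_integral_prod (hm : IsLocalModel u μ₁ μ₂ μ₃ p₁ p₂ p₃ p₄)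
    (a b c d : Outc) : ringP 4 u ![a, b, c, d] = ∫ z, p₁ a (z.1, z.2.2) * p₂ b (z.1, z.2.1) *
      p₃ c (z.2.1, z.2.2) * p₄ d z.2.2 ∂μ₁.prod (μ₂.prod μ₃) := by
  rw [hm.eq_integral, ((hm.ker₁.unitValued a).prod_four (hm.ker₂.unitValued b)
    (hm.ker₃.unitValued c) (hm.ker₄.unitValued d)).integral_eq]

/-- Additivity of iterated integrals of unit-valued functions. -/
theorem iterated_add {f g : Λ₁ → Λ₂ → Λ₃ → ℝ}
    (hf : UnitValued fun z : Λ₁ × Λ₂ × Λ₃ => f z.1 z.2.1 z.2.2)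
    (hg : UnitValued fun z : Λ₁ × Λ₂ × Λ₃ => g z.1 z.2.1 z.2.2)
    (hfg : UnitValued fun z : Λ₁ × Λ₂ × Λ₃ => f z.1 z.2.1 z.2.2 + g z.1 z.2.1 z.2.2) :
    ∫ x₁, ∫ x₂, ∫ x₃, f x₁ x₂ x₃ + g x₁ x₂ x₃ ∂μ₃ ∂μ₂ ∂μ₁ =
      ∫ x₁, ∫ x₂, ∫ x₃, f x₁ x₂ x₃ ∂μ₃ ∂μ₂ ∂μ₁ + ∫ x₁, ∫ x₂, ∫ x₃, g x₁ x₂ x₃ ∂μ₃ ∂μ₂ ∂μ₁ := by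
  have h := integral_add (hf.integrable (μ₁.prod (μ₂.prod μ₃))) (hg.integrable _)
  rwa [hf.integral_eq, hg.integral_eq, hfg.integral_eq] at h

theorem integral_add_first (hm : IsLocalModel u μ₁ μ₂ μ₃ p₁ p₂ p₃ p₄) {f₂ : Λ₁ × Λ₂ → ℝ}
    {f₃ : Λ₂ × Λ₃ → ℝ} {f₄ : Λ₃ → ℝ} (h₂ : UnitValued f₂) (h₃ : UnitValued f₃)
    (h₄ : UnitValued f₄) :
    ∫ x₁, ∫ x₂, ∫ x₃, ones p₁ (x₁, x₃) * f₂ (x₁, x₂) * f₃ (x₂, x₃) * f₄ x₃ ∂μ₃ ∂μ₂ ∂μ₁ =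
    ∑ i, ∫ x₁, ∫ x₂, ∫ x₃, p₁ (.one i) (x₁, x₃) * f₂ (x₁, x₂) * f₃ (x₂, x₃) * f₄ x₃
      ∂μ₃ ∂μ₂ ∂μ₁ := by
  have h := hm.ker₁.ones_unitValued.prod_four h₂ h₃ h₄
  rw [Fin.sum_univ_two, ← iterated_add ((hm.ker₁.unitValued _).prod_four h₂ h₃ h₄)
    ((hm.ker₁.unitValued _).prod_four h₂ h₃ h₄)] <;> simp only [ones, add_mul] at h ⊢
  exact h

theorem integral_add_second (hm : IsLocalModel u μ₁ μ₂ μ₃ p₁ p₂ p₃ p₄) {f₁ : Λ₁ × Λ₃ → ℝ}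
    {f₃ : Λ₂ × Λ₃ → ℝ} {f₄ : Λ₃ → ℝ} (h₁ : UnitValued f₁) (h₃ : UnitValued f₃)
    (h₄ : UnitValued f₄) :
    ∫ x₁, ∫ x₂, ∫ x₃, f₁ (x₁, x₃) * ones p₂ (x₁, x₂) * f₃ (x₂, x₃) * f₄ x₃ ∂μ₃ ∂μ₂ ∂μ₁ =
    ∑ i, ∫ x₁, ∫ x₂, ∫ x₃, f₁ (x₁, x₃) * p₂ (.one i) (x₁, x₂) * f₃ (x₂, x₃) * f₄ x₃
      ∂μ₃ ∂μ₂ ∂μ₁ := by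
  have h := h₁.prod_four hm.ker₂.ones_unitValued h₃ h₄
  rw [Fin.sum_univ_two, ← iterated_add (h₁.prod_four (hm.ker₂.unitValued _) h₃ h₄)
    (h₁.prod_four (hm.ker₂.unitValued _) h₃ h₄)] <;> simp only [ones, add_mul, mul_add] at h ⊢
  exact h

theorem integral_add_third (hm : IsLocalModel u μ₁ μ₂ μ₃ p₁ p₂ p₃ p₄) {f₁ : Λ₁ × Λ₃ → ℝ}
    {f₂ : Λ₁ × Λ₂ → ℝ} {f₄ : Λ₃ → ℝ} (h₁ : UnitValued f₁) (h₂ : UnitValued f₂)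
    (h₄ : UnitValued f₄) :
    ∫ x₁, ∫ x₂, ∫ x₃, f₁ (x₁, x₃) * f₂ (x₁, x₂) * ones p₃ (x₂, x₃) * f₄ x₃ ∂μ₃ ∂μ₂ ∂μ₁ =
    ∑ i, ∫ x₁, ∫ x₂, ∫ x₃, f₁ (x₁, x₃) * f₂ (x₁, x₂) * p₃ (.one i) (x₂, x₃) * f₄ x₃
      ∂μ₃ ∂μ₂ ∂μ₁ := by
  have h := h₁.prod_four h₂ hm.ker₃.ones_unitValued h₄
  rw [Fin.sum_univ_two, ← iterated_add (h₁.prod_four h₂ (hm.ker₃.unitValued _) h₄)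
    (h₁.prod_four h₂ (hm.ker₃.unitValued _) h₄)] <;> simp only [ones, add_mul, mul_add] at h ⊢
  exact h

theorem sum_vco_sq {u : ℝ} (hu : u ^ 2 ≤ 1) : vco u 0 ^ 2 + vco u 1 ^ 2 = 1 := by
  simp [vco, Real.sq_sqrt (sub_nonneg.2 hu)]

theorem sum_uco_sq {u : ℝ} (hu : u ^ 2 ≤ 1) : uco u 0 ^ 2 + uco u 1 ^ 2 = 1 := by
  simp [uco, Real.sq_sqrt (sub_nonneg.2 hu)]

theorem sq_sub_lt_of_lt {u v : ℝ} (hu : 0.841 < u) (hu1 : u < 1) (hv : v ^ 2 = 1 - u ^ 2) :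
    (u * v ^ 3 - u ^ 3 * v) ^ 2 < v ^ 2 - 3 * v ^ 4 := by
  have hub : 0.707281 < u ^ 2 := by nlinarith
  have hub1 : u ^ 2 < 1 := by nlinarith
  have e1 : (u * v ^ 3 - u ^ 3 * v) ^ 2 = v ^ 2 * (u ^ 2 * (v ^ 2 - u ^ 2) ^ 2) := by ring
  have e2 : v ^ 2 - 3 * v ^ 4 = v ^ 2 * (1 - 3 * v ^ 2) := by ring
  rw [e1, e2, hv]
  refine mul_lt_mul_of_pos_left ?_ (sub_pos.2 hub1)
  generalize u ^ 2 = q at *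
  have h : 0 < (1 - q) * (2 * q ^ 2 - 1) := mul_pos (by linarith) (by nlinarith)
  linear_combination 2 * h

/-- If the binary token functions exist, then the model is contradictory for `u` above `2 ^ (-1 / 4)`. -/
theorem IsSplit.elim (hs : IsSplit μ₁ μ₂ μ₃ p₁ p₂ p₃ X Y S T)
    (hm : IsLocalModel u μ₁ μ₂ μ₃ p₁ p₂ p₃ p₄) (hu : (0.841 : ℝ) < u) (hu1 : u < 1) : False := by
  have hu2 : u ^ 2 ≤ 1 := by nlinarith
  obtain ⟨val1, -, val2, val3, val4, val5, val6⟩ := ringP_four_values u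
  have hv := sum_vco_sq hu2
  have hU := sum_uco_sq hu2
  set M := ∫ x₃, (1 - S x₃) * (1 - T x₃) * p₄ .two x₃ ∂μ₃ with hM
  set K := ∫ x₃, S x₃ * (1 - T x₃) * p₄ (.one 0) x₃ ∂μ₃ with hK
  set L := ∫ x₁, ∫ x₂, X x₁ * (1 - Y x₂) * p₂ (.one 0) (x₁, x₂) ∂μ₂ ∂μ₁ with hL
  set G₁ := ∫ x₁, ∫ x₃, X x₁ * p₁ (.one 0) (x₁, x₃) * ((1 - T x₃) * p₄ (.one 0) x₃) ∂μ₃ ∂μ₁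
    with hG₁
  set G₃ := ∫ x₂, ∫ x₃, (1 - Y x₂) * S x₃ * p₃ (.one 0) (x₂, x₃) * p₄ (.one 0) x₃ ∂μ₃ ∂μ₂
    with hG₃
  have hX1 : ∫ x₁, (1 - X x₁) ∂μ₁ = 1 - ∫ x₁, X x₁ ∂μ₁ := by
    rw [integral_sub (integrable_const _) (hs.unitX.integrable _)]; simp
  have hY1 : ∫ x₂, (1 - Y x₂) ∂μ₂ = 1 - ∫ x₂, Y x₂ ∂μ₂ := by
    rw [integral_sub (integrable_const _) (hs.unitY.integrable _)]; simp
  set x := ∫ x₁, X x₁ ∂μ₁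
  set y := ∫ x₂, Y x₂ ∂μ₂
  have k₁ := hm.ker₁.unitValued
  have k₂ := hm.ker₂.unitValued
  have k₃ := hm.ker₃.unitValued
  have k₄ := hm.ker₄.unitValued
  have o₁ := hm.ker₁.ones_unitValued
  have o₂ := hm.ker₂.ones_unitValued
  have o₃ := hm.ker₃.ones_unitValued
  have e1 : x * y * M = 1 / 16 := by
    rw [← val1, hm.eq_integral, hs.integral_congr hm
      (g := fun x₁ x₂ x₃ => X x₁ * (Y x₂ * ((1 - S x₃) * (1 - T x₃) * p₄ .two x₃)))]
    · simp only [integral_const_mul, integral_mul_const, ← hM]; ring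
    · intro x₁ x₂ x₃ hX hY a0 a2 a1 b0 b2 b1 c0 c2 c1
      rw [a0, b2, c0]
      rcases hX with hX | hX <;> rcases hY with hY | hY <;> rw [hX, hY] <;> ring
  have e2 : x * (1 - y) * M = 1 / 16 := by
    have h := integral_add_second hm (k₁ .zero) o₃ (k₄ .two)
    simp only [integral_add_third hm (k₁ .zero) (k₂ _) (k₄ .two), ← hm.eq_integral, val2,
      Fin.sum_univ_two] at h
    rw [hs.integral_congr hm
      (g := fun x₁ x₂ x₃ => X x₁ * ((1 - Y x₂) * ((1 - S x₃) * (1 - T x₃) * p₄ .two x₃)))] at h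
    · simp only [integral_const_mul, integral_mul_const, ← hM, hY1] at h
      linear_combination h + (vco u 0 ^ 2 + vco u 1 ^ 2 + 1) / 16 * hv
    · intro x₁ x₂ x₃ hX hY a0 a2 a1 b0 b2 b1 c0 c2 c1
      rw [a0, b1, c1]
      rcases hX with hX | hX <;> rcases hY with hY | hY <;> rw [hX, hY] <;> ring
  have e3 : (1 - x) * y * M = 1 / 16 := by
    have h := integral_add_first hm o₂ (k₃ .zero) (k₄ .two)
    simp only [integral_add_second hm (k₁ _) (k₃ .zero) (k₄ .two), ← hm.eq_integral, val3,
      Fin.sum_univ_two] at h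
    rw [hs.integral_congr hm
      (g := fun x₁ x₂ x₃ => (1 - X x₁) * (Y x₂ * ((1 - S x₃) * (1 - T x₃) * p₄ .two x₃)))] at h
    · simp only [integral_const_mul, integral_mul_const, ← hM, hX1] at h
      linear_combination h + (uco u 0 ^ 2 + uco u 1 ^ 2 + 1) / 16 * hU
    · intro x₁ x₂ x₃ hX hY a0 a2 a1 b0 b2 b1 c0 c2 c1
      rw [a1, b1, c0]
      rcases hX with hX | hX <;> rcases hY with hY | hY <;> rw [hX, hY] <;> ring
  have e4 : (1 - x) * (1 - y) * K = vco u 0 ^ 2 / 16 := by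
    have h := integral_add_third hm (k₁ .two) (k₂ .zero) (k₄ (.one 0))
    simp only [← hm.eq_integral, val4, Fin.sum_univ_two] at h
    rw [hs.integral_congr hm (g := fun x₁ x₂ x₃ =>
      (1 - X x₁) * ((1 - Y x₂) * (S x₃ * (1 - T x₃) * p₄ (.one 0) x₃)))] at h
    · simp only [integral_const_mul, integral_mul_const, ← hK, hX1, hY1] at h
      linear_combination h + vco u 0 ^ 2 / 16 * hv
    · intro x₁ x₂ x₃ hX hY a0 a2 a1 b0 b2 b1 c0 c2 c1
      rw [a2, b0, c1]
      rcases hX with hX | hX <;> rcases hY with hY | hY <;> rw [hX, hY] <;> ring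
  have e5 : L * M = vco u 0 ^ 2 / 16 := by
    have h := integral_add_third hm (k₁ .zero) (k₂ (.one 0)) (k₄ .two)
    simp only [← hm.eq_integral, val2, Fin.sum_univ_two] at h
    rw [hs.integral_congr hm (g := fun x₁ x₂ x₃ =>
      X x₁ * (1 - Y x₂) * p₂ (.one 0) (x₁, x₂) *
        ((1 - S x₃) * (1 - T x₃) * p₄ .two x₃))] at h
    · simp only [integral_const_mul _ (fun x₃ => (1 - S x₃) * (1 - T x₃) * p₄ .two x₃), ← hM] at h
      simp only [integral_mul_const, ← hL] at h
      linear_combination h + vco u 0 ^ 2 / 16 * hv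
    · intro x₁ x₂ x₃ hX hY a0 a2 a1 b0 b2 b1 c0 c2 c1
      rw [a0, c1]
      rcases hX with hX | hX <;> rcases hY with hY | hY <;> rw [hX, hY] at b1 ⊢
      iterate 3 ring
      have h0 := hm.ker₂.nonneg (.one 0) (x₁, x₂)
      have h1 := hm.ker₂.nonneg (.one 1) (x₁, x₂)
      rw [ones] at b1
      rw [show p₂ (.one 0) (x₁, x₂) = 0 by linarith]
      ring
  have e6 : y * G₁ = vco u 0 ^ 4 / 16 := by
    have h := hm.eq_integral (.one 0) .two .zero (.one 0)
    rw [val5, hs.integral_congr hm (g := fun x₁ x₂ x₃ =>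
      Y x₂ * (X x₁ * p₁ (.one 0) (x₁, x₃) * ((1 - T x₃) * p₄ (.one 0) x₃)))] at h
    · simp only [integral_const_mul (Y _)] at h
      simp only [integral_mul_const] at h
      rw [integral_const_mul] at h
      linear_combination -h
    · intro x₁ x₂ x₃ hX hY a0 a2 a1 b0 b2 b1 c0 c2 c1
      rw [b2, c0]
      rcases hX with hX | hX <;> rcases hY with hY | hY <;> rw [hX, hY] <;> ring
  have e7 : (1 - x) * G₃ = vco u 0 ^ 4 / 16 := by
    have h := hm.eq_integral .two .zero (.one 0) (.one 0)
    rw [val4, hs.integral_congr hm (g := fun x₁ x₂ x₃ =>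
      (1 - X x₁) * ((1 - Y x₂) * S x₃ * p₃ (.one 0) (x₂, x₃) * p₄ (.one 0) x₃))] at h
    · simp only [integral_const_mul (1 - X _)] at h
      rw [integral_mul_const, hX1] at h
      linear_combination -h
    · intro x₁ x₂ x₃ hX hY a0 a2 a1 b0 b2 b1 c0 c2 c1
      rw [a2, b0]
      rcases hX with hX | hX <;> rcases hY with hY | hY <;> rw [hX, hY] <;> ring
  have hMne : M ≠ 0 := by rintro h; rw [h] at e1; norm_num at e1
  have hxne : x ≠ 0 := by rintro h; rw [h] at e1; norm_num at e1
  have hyne : y ≠ 0 := by rintro h; rw [h] at e1; norm_num at e1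
  have hy : y = 1 / 2 := by
    have : x * M * (y - 1 / 2) = 0 := by linear_combination (e1 - e2) / 2
    have := (mul_eq_zero.1 this).resolve_left (mul_ne_zero hxne hMne)
    linarith
  have hx : x = 1 / 2 := by
    have : y * M * (x - 1 / 2) = 0 := by linear_combination (e1 - e3) / 2
    have := (mul_eq_zero.1 this).resolve_left (mul_ne_zero hyne hMne)
    linarith
  have hM4 : M = 1 / 4 := by rw [hx, hy] at e1; linarith
  have hK4 : K = vco u 0 ^ 2 / 4 := by rw [hx, hy] at e4; linarith
  have hL4 : L = vco u 0 ^ 2 / 4 := by rw [hM4] at e5; linarith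
  -- the probabilities restricted to the configuration `X = 1`, `Y = 0`
  have w := (hs.unitX.comp measurable_fst).mul
    (hs.unitY.one_sub.comp (measurable_snd : Measurable (Prod.snd : Λ₁ × Λ₂ → Λ₂)))
  have j0 := (o₁.prod_four (w.mul o₂) o₃ (k₄ (.one 0)))
  have j1 := ((k₁ (.one 0)).prod_four (w.mul o₂) o₃ (k₄ (.one 0)))
  have j2 := (o₁.prod_four (w.mul (k₂ (.one 0))) o₃ (k₄ (.one 0)))
  have j3 := (o₁.prod_four (w.mul o₂) (k₃ (.one 0)) (k₄ (.one 0)))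
  have jl := ((k₁ (.one 1)).prod_four (k₂ (.one 1)) (k₃ (.one 1)) (k₄ (.one 0)))
  have f0 := (j0.integral_eq μ₁ μ₂ μ₃).trans (c := x * ((1 - y) * K)) (by
    rw [hs.integral_congr hm (g := fun x₁ x₂ x₃ =>
      X x₁ * ((1 - Y x₂) * (S x₃ * (1 - T x₃) * p₄ (.one 0) x₃)))]
    · simp only [integral_const_mul, integral_mul_const, ← hK, hY1]
      rfl
    · intro x₁ x₂ x₃ hX hY a0 a2 a1 b0 b2 b1 c0 c2 c1
      rw [a1, b1, c1]
      rcases hX with hX | hX <;> rcases hY with hY | hY <;> rw [hX, hY] <;> ring)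
  have f1 := (j1.integral_eq μ₁ μ₂ μ₃).trans (c := (1 - y) * G₁) (by
    rw [hs.integral_congr hm (g := fun x₁ x₂ x₃ =>
      (1 - Y x₂) * (X x₁ * p₁ (.one 0) (x₁, x₃) * ((1 - T x₃) * p₄ (.one 0) x₃)))]
    · simp only [integral_const_mul (1 - Y _)]
      simp only [integral_mul_const, hY1]
      rw [integral_const_mul]
    · intro x₁ x₂ x₃ hX hY a0 a2 a1 b0 b2 b1 c0 c2 c1
      rw [b1, c1]
      rcases hX with hX | hX <;> rcases hY with hY | hY <;> rw [hX, hY] <;> ring)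
  have f2 := (j2.integral_eq μ₁ μ₂ μ₃).trans (c := L * K) (by
    rw [hs.integral_congr hm (g := fun x₁ x₂ x₃ =>
      X x₁ * (1 - Y x₂) * p₂ (.one 0) (x₁, x₂) * (S x₃ * (1 - T x₃) * p₄ (.one 0) x₃))]
    · simp only [integral_const_mul _ (fun x₃ => S x₃ * (1 - T x₃) * p₄ (.one 0) x₃), ← hK]
      simp only [integral_mul_const, ← hL]
    · intro x₁ x₂ x₃ hX hY a0 a2 a1 b0 b2 b1 c0 c2 c1
      rw [a1, c1]
      rcases hX with hX | hX <;> rcases hY with hY | hY <;> rw [hX, hY] <;> ring)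
  have f3 := (j3.integral_eq μ₁ μ₂ μ₃).trans (c := x * G₃) (by
    rw [hs.integral_congr hm (g := fun x₁ x₂ x₃ =>
      X x₁ * ((1 - Y x₂) * S x₃ * p₃ (.one 0) (x₂, x₃) * p₄ (.one 0) x₃))]
    · simp only [integral_const_mul (X _)]
      rw [integral_mul_const]
    · intro x₁ x₂ x₃ hX hY a0 a2 a1 b0 b2 b1 c0 c2 c1
      rw [a1, b1]
      rcases hX with hX | hX <;> rcases hY with hY | hY <;> rw [hX, hY] <;> ring)
  have fl := hm.eq_integral_prod (.one 1) (.one 1) (.one 1) (.one 0)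
  have i0 := j0.integrable (μ₁.prod (μ₂.prod μ₃))
  have i1 := j1.integrable (μ₁.prod (μ₂.prod μ₃))
  have i2 := j2.integrable (μ₁.prod (μ₂.prod μ₃))
  have i3 := j3.integrable (μ₁.prod (μ₂.prod μ₃))
  have il := jl.integrable (μ₁.prod (μ₂.prod μ₃))
  have hle := integral_mono i0 (((il.add i1).add i2).add i3) (by
    intro z
    have c0 := hm.ker₁.nonneg (.one 0) (z.1, z.2.2)
    have c1 := hm.ker₁.nonneg (.one 1) (z.1, z.2.2)
    have d0 := hm.ker₂.nonneg (.one 0) (z.1, z.2.1)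
    have d1 := hm.ker₂.nonneg (.one 1) (z.1, z.2.1)
    have g0 := hm.ker₃.nonneg (.one 0) (z.2.1, z.2.2)
    have g1 := hm.ker₃.nonneg (.one 1) (z.2.1, z.2.2)
    have q := hm.ker₄.nonneg (.one 0) z.2.2
    have w0 := w.nonneg (z.1, z.2.1)
    have w1 := w.le_one (z.1, z.2.1)
    simp only [Pi.add_apply, ones]
    simp only at w0 w1
    generalize p₁ (.one 0) (z.1, z.2.2) = A at *
    generalize p₁ (.one 1) (z.1, z.2.2) = A' at *
    generalize p₂ (.one 0) (z.1, z.2.1) = B at *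
    generalize p₂ (.one 1) (z.1, z.2.1) = B' at *
    generalize p₃ (.one 0) (z.2.1, z.2.2) = C at *
    generalize p₃ (.one 1) (z.2.1, z.2.2) = C' at *
    generalize p₄ (.one 0) z.2.2 = Q at *
    generalize X z.1 * (1 - Y z.2.1) = W at *
    have key : 0 ≤ (1 - W) * (A' * B' * C' * Q) +
        W * Q * (A * B * C' + A * B' * C + A' * B * C + A * B * C + A * B * C) := by
      have := sub_nonneg.2 w1
      positivity
    linear_combination key)
  rw [integral_add' ((il.add i1).add i2) i3, integral_add' (il.add i1) i2, integral_add' il i1,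
    f0, f1, f2, f3, ← fl, val6, hx, hy, hK4, hL4] at hle
  rw [hy] at e6
  rw [hx] at e7
  have hv0 : vco u 0 ^ 2 = 1 - u ^ 2 := by simp [vco, Real.sq_sqrt (sub_nonneg.2 hu2)]
  have hu0 : uco u 0 = u := rfl
  have hu1' : uco u 1 = vco u 0 := rfl
  have hv1 : vco u 1 = -u := rfl
  rw [hu0, hu1', hv1] at hle
  refine lt_irrefl _ ((sq_sub_lt_of_lt hu hu1 hv0).trans_le ?_)
  linear_combination 16 * hle + 16 * e6 + 16 * e7

end Split

/-- The distribution `P` announces exactly `n` tokens. -/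
def HasTok (P : Outc → ℝ) (n : ℕ) : Prop := ∑ a, P a = 1 ∧ ∀ a, P a ≠ 0 → a.tok = n

theorem HasTok.values {P : Outc → ℝ} {n : ℕ} (h : HasTok P n) :
    (n = 0 ∧ P .zero = 1 ∧ P (.one 0) + P (.one 1) = 0 ∧ P .two = 0) ∨
    (n = 1 ∧ P .zero = 0 ∧ P (.one 0) + P (.one 1) = 1 ∧ P .two = 0) ∨
    (n = 2 ∧ P .zero = 0 ∧ P (.one 0) + P (.one 1) = 0 ∧ P .two = 1) := by
  obtain ⟨hsum, h⟩ := h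
  rw [Outc.sum_eq] at hsum
  have h0 := not_imp_comm.1 (h .zero)
  have h1 := fun i => not_imp_comm.1 (h (.one i))
  have h2 := not_imp_comm.1 (h .two)
  simp only [Outc.tok] at h0 h1 h2
  rcases Nat.lt_or_ge n 3 with hn | hn
  · interval_cases n
    · simp_all
    · simp_all
    · simp_all
  · rw [h0 (by omega), h1 0 (by omega), h1 1 (by omega), h2 (by omega)] at hsum
    norm_num at hsum

theorem HasTok.unique {P : Outc → ℝ} {n m : ℕ} (h : HasTok P n) (h' : HasTok P m) : n = m := by
  obtain ⟨a, -, ha⟩ := Finset.exists_ne_zero_of_sum_ne_zero (h.1 ▸ one_ne_zero)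
  exact (h.2 a ha).symm.trans (h'.2 a ha)

/-- The four distributions announce a compatible number of tokens. -/
def HasCompatTok (P₁ P₂ P₃ P₄ : Outc → ℝ) : Prop :=
  ∃ n₁ n₂ n₃ n₄, HasTok P₁ n₁ ∧ HasTok P₂ n₂ ∧ HasTok P₃ n₃ ∧ HasTok P₄ n₄ ∧ Compat n₁ n₂ n₃ n₄

theorem HasCompatTok.symm {P₁ P₂ P₃ P₄ : Outc → ℝ} (h : HasCompatTok P₁ P₂ P₃ P₄) :
    HasCompatTok P₃ P₂ P₁ P₄ := by
  obtain ⟨n₁, n₂, n₃, n₄, h₁, h₂, h₃, h₄, x, y, s, t, h⟩ := h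
  exact ⟨n₃, n₂, n₁, n₄, h₃, h₂, h₁, h₄, y, x, t, s, by omega⟩

/-- Independent outcomes whose token counts are always compatible have deterministic counts. -/
theorem hasCompatTok_of_forall {P₁ P₂ P₃ P₄ : Outc → ℝ} (s₁ : ∑ a, P₁ a = 1) (s₂ : ∑ a, P₂ a = 1)
    (s₃ : ∑ a, P₃ a = 1) (s₄ : ∑ a, P₄ a = 1)
    (h : ∀ a b c d, P₁ a * P₂ b * P₃ c * P₄ d ≠ 0 → Compat a.tok b.tok c.tok d.tok) :
    HasCompatTok P₁ P₂ P₃ P₄ := by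
  obtain ⟨a, -, ha⟩ := Finset.exists_ne_zero_of_sum_ne_zero (s₁ ▸ one_ne_zero)
  obtain ⟨b, -, hb⟩ := Finset.exists_ne_zero_of_sum_ne_zero (s₂ ▸ one_ne_zero)
  obtain ⟨c, -, hc⟩ := Finset.exists_ne_zero_of_sum_ne_zero (s₃ ▸ one_ne_zero)
  obtain ⟨d, -, hd⟩ := Finset.exists_ne_zero_of_sum_ne_zero (s₄ ▸ one_ne_zero)
  have hsum : ∀ a b c d, P₁ a ≠ 0 → P₂ b ≠ 0 → P₃ c ≠ 0 → P₄ d ≠ 0 →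
      a.tok + b.tok + c.tok + d.tok = 4 := by
    intro a b c d ha hb hc hd
    obtain ⟨x, y, s, t, h⟩ := h a b c d (by positivity)
    omega
  have h0 := hsum a b c d ha hb hc hd
  refine ⟨a.tok, b.tok, c.tok, d.tok, ⟨s₁, fun e he => ?_⟩, ⟨s₂, fun e he => ?_⟩,
    ⟨s₃, fun e he => ?_⟩, ⟨s₄, fun e he => ?_⟩, h a b c d (by positivity)⟩
  · have := hsum e b c d he hb hc hd; omega
  · have := hsum a e c d ha he hc hd; omega
  · have := hsum a b e d ha hb he hd; omega
  · have := hsum a b c e ha hb hc he; omega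

/-- The probability that two independent outcomes announce one token in total. -/
noncomputable def oneTok (P Q : Outc → ℝ) : ℝ :=
  P .zero * (Q (.one 0) + Q (.one 1)) + (P (.one 0) + P (.one 1)) * Q .zero

theorem HasCompatTok.split {P R₁ R₀ P₁ P₀ Q : Outc → ℝ} {ξ : ℕ} (hξ : ξ ≤ 1)
    (h₁ : HasCompatTok P R₁ P₁ Q) (h₀ : HasCompatTok P R₀ P₀ Q) (d₁ : HasTok R₁ (ξ + 1))
    (d₀ : HasTok R₀ ξ) :
    P .zero = ξ * (1 - oneTok P₁ Q) ∧ P .two = (1 - ξ) * oneTok P₁ Q := by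
  obtain ⟨n, r, m, l, hn, hr, hm, hl, hc⟩ := h₁
  obtain ⟨n', r', m', l', hn', hr', -, -, hc'⟩ := h₀
  obtain rfl := hn.unique hn'
  obtain rfl := hr.unique d₁
  obtain rfl := hr'.unique d₀
  obtain ⟨x, y, s, t, hc⟩ := hc
  obtain ⟨x', y', s', t', hc'⟩ := hc'
  have hsum : n + r' + m + l = 3 := by omega
  have hlow : 1 ≤ n + r' := by omega
  have hup : n + r' ≤ 2 := by omega
  clear hc hc'
  unfold oneTok
  rcases hn.values with ⟨rfl, e0, e1, e2⟩ | ⟨rfl, e0, e1, e2⟩ | ⟨rfl, e0, e1, e2⟩ <;>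
  rcases hm.values with ⟨rfl, g0, g1, g2⟩ | ⟨rfl, g0, g1, g2⟩ | ⟨rfl, g0, g1, g2⟩ <;>
  rcases hl.values with ⟨rfl, k0, k1, k2⟩ | ⟨rfl, k0, k1, k2⟩ | ⟨rfl, k0, k1, k2⟩ <;>
  interval_cases r' <;> first | omega | (rw [e0, e2, g0, g1, k0, k1]; norm_num)

section Existence

variable {Λ₁ Λ₂ Λ₃ : Type} [MeasurableSpace Λ₁] [MeasurableSpace Λ₂]
  [MeasurableSpace Λ₃] {u : ℝ} {μ₁ : Measure Λ₁} {μ₂ : Measure Λ₂} {μ₃ : Measure Λ₃}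
  [IsProbabilityMeasure μ₁] [IsProbabilityMeasure μ₂] [IsProbabilityMeasure μ₃]
  {p₁ : Outc → Λ₁ × Λ₃ → ℝ} {p₂ : Outc → Λ₁ × Λ₂ → ℝ} {p₃ : Outc → Λ₂ × Λ₃ → ℝ}
  {p₄ : Outc → Λ₃ → ℝ}

theorem ae_prod_rotate {P : Λ₁ → Λ₂ → Λ₃ → Prop}
    (h : ∀ᵐ z ∂μ₁.prod (μ₂.prod μ₃), P z.1 z.2.1 z.2.2) :
    ∀ᵐ z ∂μ₃.prod (μ₁.prod μ₂), P z.2.1 z.2.2 z.1 :=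
  ((measurePreserving_prodAssoc μ₁ μ₂ μ₃).comp
    Measure.measurePreserving_swap).quasiMeasurePreserving.ae h

theorem ae_prod_swap {P : Λ₁ → Λ₂ → Prop} (h : ∀ᵐ z ∂μ₁.prod μ₂, P z.1 z.2) :
    ∀ᵐ z ∂μ₂.prod μ₁, P z.2 z.1 :=
  (Measure.measurePreserving_swap (μ := μ₂) (ν := μ₁)).quasiMeasurePreserving.ae h

theorem IsLocalModel.ae_hasCompatTok (hm : IsLocalModel u μ₁ μ₂ μ₃ p₁ p₂ p₃ p₄) :
    ∀ᵐ z ∂μ₁.prod (μ₂.prod μ₃), HasCompatTok (fun a => p₁ a (z.1, z.2.2))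
      (fun a => p₂ a (z.1, z.2.1)) (fun a => p₃ a (z.2.1, z.2.2)) fun a => p₄ a z.2.2 := by
  have h : ∀ a b c d, ∀ᵐ z ∂μ₁.prod (μ₂.prod μ₃),
      p₁ a (z.1, z.2.2) * p₂ b (z.1, z.2.1) * p₃ c (z.2.1, z.2.2) * p₄ d z.2.2 ≠ 0 →
        Compat a.tok b.tok c.tok d.tok := by
    intro a b c d
    by_cases h0 : ringP 4 u ![a, b, c, d] = 0
    · have hF := (hm.ker₁.unitValued a).prod_four (hm.ker₂.unitValued b) (hm.ker₃.unitValued c)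
        (hm.ker₄.unitValued d)
      rw [hm.eq_integral_prod, integral_eq_zero_iff_of_nonneg hF.nonneg (hF.integrable _)] at h0
      filter_upwards [h0] with z hz hne using absurd hz hne
    · exact Filter.Eventually.of_forall fun _ _ => compat_of_ringP_ne_zero h0
  have : Countable Outc := Finite.to_countable
  simp only [← ae_all_iff] at h
  filter_upwards [h] with z hz
  exact hasCompatTok_of_forall (hm.ker₁.sum_eq _) (hm.ker₂.sum_eq _) (hm.ker₃.sum_eq _)
    (hm.ker₄.sum_eq _) hz

theorem IsLocalModel.exists_isSplit (hm : IsLocalModel u μ₁ μ₂ μ₃ p₁ p₂ p₃ p₄) :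
    ∃ X Y S T, IsSplit μ₁ μ₂ μ₃ p₁ p₂ p₃ X Y S T := by
  obtain ⟨val1, val2, -⟩ := ringP_four_values u
  have n1 := hm.not_ae_eq_zero val1
  have n2 := hm.not_ae_eq_zero val2
  have good₁ := hm.ae_hasCompatTok
  have good₃ := ae_prod_rotate (P := fun x₁ x₂ x₃ => HasCompatTok (fun a => p₁ a (x₁, x₃))
    (fun a => p₂ a (x₁, x₂)) (fun a => p₃ a (x₂, x₃)) fun a => p₄ a x₃) good₁
  have good₂ := ae_prod_rotate (P := fun x₃ x₁ x₂ => HasCompatTok (fun a => p₁ a (x₁, x₃))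
    (fun a => p₂ a (x₁, x₂)) (fun a => p₃ a (x₂, x₃)) fun a => p₄ a x₃) good₃
  obtain ⟨x₃, hx₃, hgood⟩ : ∃ x₃, p₄ .two x₃ ≠ 0 ∧ ∀ᵐ w ∂μ₁.prod μ₂,
      HasCompatTok (fun a => p₁ a (w.1, x₃)) (fun a => p₂ a w) (fun a => p₃ a (w.2, x₃))
        fun a => p₄ a x₃ := by
    by_contra hne
    refine n1 (Filter.Eventually.of_forall fun x₁ => Filter.Eventually.of_forall fun x₂ => ?_)
    filter_upwards [Measure.ae_ae_of_ae_prod good₃] with x₃ h₃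
    have : p₄ .two x₃ = 0 := by
      by_contra h
      exact hne ⟨x₃, h, h₃⟩
    rw [this, mul_zero]
  set X : Λ₁ → ℝ := fun x₁ => p₁ .zero (x₁, x₃) with hX
  set Y : Λ₂ → ℝ := fun x₂ => p₃ .zero (x₂, x₃) with hY
  have htok : ∀ᵐ w ∂μ₁.prod μ₂, ∃ ξ η : ℕ, ξ ≤ 1 ∧ η ≤ 1 ∧ X w.1 = ξ ∧ Y w.2 = η ∧
      HasTok (fun a => p₂ a (w.1, w.2)) (ξ + η) := by
    filter_upwards [hgood] with w ⟨n₁, n₂, n₃, n₄, h₁, h₂, h₃, h₄, x, y, s, t, h⟩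
    obtain rfl : 2 = n₄ := h₄.2 .two hx₃
    obtain rfl : n₂ = x + y := by omega
    refine ⟨x, y, by omega, by omega, ?_, ?_, h₂⟩
    · rcases h₁.values with ⟨rfl, e, -⟩ | ⟨rfl, e, -⟩ | ⟨rfl, e, -⟩
      · obtain rfl : x = 1 := by omega
        simpa [hX] using e
      · obtain rfl : x = 0 := by omega
        simpa [hX] using e
      · omega
    · rcases h₃.values with ⟨rfl, e, -⟩ | ⟨rfl, e, -⟩ | ⟨rfl, e, -⟩
      · obtain rfl : y = 1 := by omega
        simpa [hY] using e
      · obtain rfl : y = 0 := by omega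
        simpa [hY] using e
      · omega
  have htok' := Measure.ae_ae_of_ae_prod (ae_prod_swap (P := fun x₁ x₂ => ∃ ξ η : ℕ, ξ ≤ 1 ∧
    η ≤ 1 ∧ X x₁ = ξ ∧ Y x₂ = η ∧ HasTok (fun a => p₂ a (x₁, x₂)) (ξ + η)) htok)
  replace htok := Measure.ae_ae_of_ae_prod htok
  have eq₂ : ∀ᵐ x₁ ∂μ₁, ∀ᵐ x₂ ∂μ₂, p₂ .zero (x₁, x₂) = (1 - X x₁) * (1 - Y x₂) ∧
      p₂ .two (x₁, x₂) = X x₁ * Y x₂ := by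
    filter_upwards [htok] with x₁ h
    filter_upwards [h] with x₂ ⟨ξ, η, hξ, hη, eX, eY, h⟩
    rw [eX, eY]
    interval_cases ξ <;> interval_cases η <;>
      rcases h.values with ⟨e, e0, -, e2⟩ | ⟨e, e0, -, e2⟩ | ⟨e, e0, -, e2⟩ <;>
      simp_all
  have binX : ∀ᵐ x₁ ∂μ₁, X x₁ = 0 ∨ X x₁ = 1 := by
    filter_upwards [htok] with x₁ h
    obtain ⟨x₂, ξ, η, hξ, hη, eX, -⟩ := h.exists
    rw [eX]
    interval_cases ξ <;> simp
  have binY : ∀ᵐ x₂ ∂μ₂, Y x₂ = 0 ∨ Y x₂ = 1 := by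
    filter_upwards [htok'] with x₂ h
    obtain ⟨x₁, ξ, η, hξ, hη, -, eY, -⟩ := h.exists
    rw [eY]
    interval_cases η <;> simp
  -- each token function takes both values with positive probability
  have freqX1 : ∃ᶠ x₁ in ae μ₁, X x₁ ≠ 0 := fun h => n1 (by
    filter_upwards [h, eq₂] with x₁ h h₂
    filter_upwards [h₂] with x₂ h₂
    simp [h₂.2, not_not.1 h])
  have freqX0 : ∃ᶠ x₁ in ae μ₁, X x₁ ≠ 1 := fun h => n2 (by
    filter_upwards [h, eq₂] with x₁ h h₂
    filter_upwards [h₂] with x₂ h₂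
    simp [h₂.1, not_not.1 h])
  have freqY1 : ∃ᶠ x₂ in ae μ₂, Y x₂ ≠ 0 := fun h => n1 (by
    filter_upwards [eq₂] with x₁ h₂
    filter_upwards [h, h₂] with x₂ h h₂
    simp [h₂.2, not_not.1 h])
  have freqY0 : ∃ᶠ x₂ in ae μ₂, Y x₂ ≠ 1 := fun h => n2 (by
    filter_upwards [eq₂] with x₁ h₂
    filter_upwards [h, h₂] with x₂ h h₂
    simp [h₂.1, not_not.1 h])
  have hnest₁ := Measure.ae_ae_of_ae_prod good₁
  have hnest₂ : ∀ᵐ x₂ ∂μ₂, ∀ᵐ x₁ ∂μ₁, ∀ᵐ x₃ ∂μ₃, HasCompatTok (fun a => p₁ a (x₁, x₃))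
      (fun a => p₂ a (x₁, x₂)) (fun a => p₃ a (x₂, x₃)) fun a => p₄ a x₃ := by
    filter_upwards [Measure.ae_ae_of_ae_prod good₂] with x₂ h
    exact Measure.ae_ae_of_ae_prod (ae_prod_swap (P := fun x₃ x₁ => HasCompatTok
      (fun a => p₁ a (x₁, x₃)) (fun a => p₂ a (x₁, x₂)) (fun a => p₃ a (x₂, x₃))
        fun a => p₄ a x₃) h)
  obtain ⟨b₁, hb₁, gb₁, tb₁, binb₁⟩ :=
    (freqY1.and_eventually (hnest₂.and (htok'.and binY))).exists
  obtain ⟨b₀, hb₀, gb₀, tb₀, binb₀⟩ :=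
    (freqY0.and_eventually (hnest₂.and (htok'.and binY))).exists
  obtain ⟨a₁, ha₁, ga₁, ta₁, bina₁⟩ :=
    (freqX1.and_eventually (hnest₁.and (htok.and binX))).exists
  obtain ⟨a₀, ha₀, ga₀, ta₀, bina₀⟩ :=
    (freqX0.and_eventually (hnest₁.and (htok.and binX))).exists
  replace hb₁ := binb₁.resolve_left hb₁
  replace hb₀ := binb₀.resolve_right hb₀
  replace ha₁ := bina₁.resolve_left ha₁
  replace ha₀ := bina₀.resolve_right ha₀
  refine ⟨X, Y, fun x₃ => oneTok (fun a => p₃ a (b₁, x₃)) fun a => p₄ a x₃,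
    fun x₃ => oneTok (fun a => p₁ a (a₁, x₃)) fun a => p₄ a x₃,
    (hm.ker₁.unitValued _).comp measurable_prodMk_right,
    (hm.ker₃.unitValued _).comp measurable_prodMk_right, binX, binY, ?_, eq₂, ?_⟩
  · filter_upwards [gb₁, gb₀, tb₁, tb₀] with x₁ g₁ g₀ ⟨ξ, η, hξ, hη, eX, eY, h⟩
      ⟨ξ', η', hξ', hη', eX', eY', h'⟩
    obtain rfl : ξ = ξ' := by exact_mod_cast eX.symm.trans eX'
    obtain rfl : η = 1 := by exact_mod_cast eY.symm.trans hb₁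
    obtain rfl : η' = 0 := by exact_mod_cast eY'.symm.trans hb₀
    filter_upwards [g₁, g₀] with x₃ g₁ g₀
    rw [eX]
    exact g₁.split hξ g₀ h h'
  · have ga₁' := Measure.ae_ae_of_ae_prod ga₁
    have ga₀' := Measure.ae_ae_of_ae_prod ga₀
    filter_upwards [ga₁', ga₀', ta₁, ta₀] with x₂ g₁ g₀ ⟨ξ, η, hξ, hη, eX, eY, h⟩
      ⟨ξ', η', hξ', hη', eX', eY', h'⟩
    obtain rfl : η = η' := by exact_mod_cast eY.symm.trans eY'
    obtain rfl : ξ = 1 := by exact_mod_cast eX.symm.trans ha₁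
    obtain rfl : ξ' = 0 := by exact_mod_cast eX'.symm.trans ha₀
    filter_upwards [g₁, g₀] with x₃ g₁ g₀
    rw [eY]
    rw [add_comm] at h
    rw [zero_add] at h'
    exact g₁.symm.split hη g₀.symm h h'

end Existence

/-- For every real `u` with `0.841 < u < 1`, the square-network quantum
distribution `P_Q^□` is nonlocal on the network with bipartite sources `S₁ (A₁,A₂)`,
`S₂ (A₂,A₃)` and a tripartite source `S₃ (A₁,A₃,A₄)`. -/
theorem stmt_1 (u : ℝ) (hu : (0.841 : ℝ) < u) (hu1 : u < 1) :
    ¬ ∃ (Λ₁ Λ₂ Λ₃ : Type)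
        (m₁ : MeasurableSpace Λ₁) (m₂ : MeasurableSpace Λ₂) (m₃ : MeasurableSpace Λ₃)
        (μ₁ : @Measure Λ₁ m₁) (μ₂ : @Measure Λ₂ m₂) (μ₃ : @Measure Λ₃ m₃)
        (p₁ : Outc → Λ₁ → Λ₃ → ℝ) (p₂ : Outc → Λ₁ → Λ₂ → ℝ)
        (p₃ : Outc → Λ₂ → Λ₃ → ℝ) (p₄ : Outc → Λ₃ → ℝ),
      IsProbabilityMeasure μ₁ ∧ IsProbabilityMeasure μ₂ ∧ IsProbabilityMeasure μ₃ ∧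
      (∀ a, @Measurable _ _ (m₁.prod m₃) _ fun q : Λ₁ × Λ₃ => p₁ a q.1 q.2) ∧
      (∀ a, @Measurable _ _ (m₁.prod m₂) _ fun q : Λ₁ × Λ₂ => p₂ a q.1 q.2) ∧
      (∀ a, @Measurable _ _ (m₂.prod m₃) _ fun q : Λ₂ × Λ₃ => p₃ a q.1 q.2) ∧
      (∀ a, @Measurable _ _ m₃ _ (p₄ a)) ∧
      (∀ x y, (∀ a, 0 ≤ p₁ a x y) ∧ ∑ a, p₁ a x y = 1) ∧
      (∀ x y, (∀ a, 0 ≤ p₂ a x y) ∧ ∑ a, p₂ a x y = 1) ∧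
      (∀ x y, (∀ a, 0 ≤ p₃ a x y) ∧ ∑ a, p₃ a x y = 1) ∧
      (∀ x, (∀ a, 0 ≤ p₄ a x) ∧ ∑ a, p₄ a x = 1) ∧
      (∀ a₁ a₂ a₃ a₄ : Outc,
        ringP 4 u ![a₁, a₂, a₃, a₄] =
          ∫ x₁, ∫ x₂, ∫ x₃,
            p₁ a₁ x₁ x₃ * p₂ a₂ x₁ x₂ * p₃ a₃ x₂ x₃ * p₄ a₄ x₃ ∂μ₃ ∂μ₂ ∂μ₁) := by
  rintro ⟨Λ₁, Λ₂, Λ₃, m₁, m₂, m₃, μ₁, μ₂, μ₃, p₁, p₂, p₃, p₄, h₁, h₂, h₃, meas₁, meas₂, meas₃,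
    meas₄, k₁, k₂, k₃, k₄, h⟩
  have hm : IsLocalModel u μ₁ μ₂ μ₃ (fun a q => p₁ a q.1 q.2) (fun a q => p₂ a q.1 q.2)
      (fun a q => p₃ a q.1 q.2) p₄ :=
    ⟨⟨meas₁, fun a q => (k₁ q.1 q.2).1 a, fun q => (k₁ q.1 q.2).2⟩,
      ⟨meas₂, fun a q => (k₂ q.1 q.2).1 a, fun q => (k₂ q.1 q.2).2⟩,
      ⟨meas₃, fun a q => (k₃ q.1 q.2).1 a, fun q => (k₃ q.1 q.2).2⟩,
      ⟨meas₄, fun a q => (k₄ q).1 a, fun q => (k₄ q).2⟩, h⟩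
  obtain ⟨X, Y, S, T, hs⟩ := hm.exists_isSplit
  exact hs.elim hm hu hu1
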